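/- arXiv:2110.06174 — 6 statements merged into one kernel-verified Lean document; each statement's English description precedes it below -/
import Mathlib

section
/- For any x = (Q₁,Q₂,Q₃,P₁,P₂,P₃) ∈ ℝ⁶ with Qᵢ = 0 for some i ∈ {1,2,3} and Q_j ≠ 0, Q_k ≠ 0 for the other two indices j, k, the partial derivative of Γ with respect to Pᵢ at x equals 2PᵢQ_j²Q_k²; consequently, if moreover Γ(x) = 0, then along any solution γ of the Hamiltonian system passing through x the derivative Qᵢ′ at that instant equals 2PᵢQ_j²Q_k² and is nonzero. -/
/-- The regularized Hamiltonian `Γ` of the eight-body cubic configuration, with fixed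
energy `E`, as a function of `x = (Q₁,Q₂,Q₃,P₁,P₂,P₃) ∈ ℝ⁶`. -/
noncomputable def cubicGamma (E : ℝ) (x : Fin 6 → ℝ) : ℝ :=
  (x 3) ^ 2 * (x 1) ^ 2 * (x 2) ^ 2 + (x 0) ^ 2 * (x 4) ^ 2 * (x 2) ^ 2 +
      (x 0) ^ 2 * (x 1) ^ 2 * (x 5) ^ 2
    - 2 * (x 0) ^ 2 * (x 1) ^ 2 * (x 2) ^ 2 / Real.sqrt ((x 0) ^ 4 + (x 1) ^ 4 + (x 2) ^ 4)
    - 2 * (x 0) ^ 2 * (x 1) ^ 2 * (x 2) ^ 2 / Real.sqrt ((x 0) ^ 4 + (x 1) ^ 4)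
    - 2 * (x 0) ^ 2 * (x 1) ^ 2 * (x 2) ^ 2 / Real.sqrt ((x 0) ^ 4 + (x 2) ^ 4)
    - 2 * (x 0) ^ 2 * (x 1) ^ 2 * (x 2) ^ 2 / Real.sqrt ((x 1) ^ 4 + (x 2) ^ 4)
    - 2 * (x 1) ^ 2 * (x 2) ^ 2 - 2 * (x 0) ^ 2 * (x 2) ^ 2 - 2 * (x 0) ^ 2 * (x 1) ^ 2
    - E * (x 0) ^ 2 * (x 1) ^ 2 * (x 2) ^ 2

/-- The index in `Fin 6` of the coordinate `Qᵢ`. -/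
def Qidx (i : Fin 3) : Fin 6 := ⟨i.val, by omega⟩

/-- The index in `Fin 6` of the coordinate `Pᵢ`. -/
def Pidx (i : Fin 3) : Fin 6 := ⟨i.val + 3, by omega⟩

/-- Partial derivative of `f : ℝ⁶ → ℝ` with respect to the `i`-th coordinate at `x`. -/
noncomputable def pderiv6 (f : (Fin 6 → ℝ) → ℝ) (i : Fin 6) (x : Fin 6 → ℝ) : ℝ :=
  deriv (fun t => f (Function.update x i t)) (x i)

/-- `γ : ℝ → ℝ⁶` is a solution of the Hamiltonian system associated to `Γ` (energy `E`):
`Qᵢ′(s) = ∂Γ/∂Pᵢ(γ(s))` and `Pᵢ′(s) = −∂Γ/∂Qᵢ(γ(s))` for `i = 1,2,3`. -/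
def IsCubicSol (E : ℝ) (γ : ℝ → Fin 6 → ℝ) : Prop :=
  ∀ s : ℝ, ∀ i : Fin 3,
    HasDerivAt (fun u => γ u (Qidx i)) (pderiv6 (cubicGamma E) (Pidx i) (γ s)) s ∧
    HasDerivAt (fun u => γ u (Pidx i)) (-pderiv6 (cubicGamma E) (Qidx i) (γ s)) s

/-- On the collision set `Qᵢ = 0`, the Hamiltonian reduces to `(Pᵢ² - 2) Q_j² Q_k²`. -/
theorem cubicGamma_update (E : ℝ) (x : Fin 6 → ℝ) (i j k : Fin 3)
    (hij : i ≠ j) (hik : i ≠ k) (hjk : j ≠ k) (hQi : x (Qidx i) = 0) (t : ℝ) :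
    cubicGamma E (Function.update x (Pidx i) t) =
      (t ^ 2 - 2) * ((x (Qidx j)) ^ 2 * (x (Qidx k)) ^ 2) := by
  fin_cases i <;> fin_cases j <;> fin_cases k <;>
    first
    | exact absurd rfl hij
    | exact absurd rfl hik
    | exact absurd rfl hjk
    | (simp [Qidx, Pidx] at hQi ⊢
       simp [cubicGamma, Function.update_apply, hQi]
       try ring)

/-- At a point `x` with `Qᵢ = 0`, `Q_j ≠ 0`, `Q_k ≠ 0` (`i, j, k` distinct), the partial
derivative `∂Γ/∂Pᵢ(x)` equals `2PᵢQ_j²Q_k²`; consequently, if moreover `Γ(x) = 0`, then along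
any solution `γ` of the Hamiltonian system passing through `x`, the derivative `Qᵢ′` at that
instant equals `2PᵢQ_j²Q_k²` and is nonzero. -/
theorem collision_regularized (E : ℝ) (x : Fin 6 → ℝ) (i j k : Fin 3)
    (hij : i ≠ j) (hik : i ≠ k) (hjk : j ≠ k)
    (hQi : x (Qidx i) = 0) (hQj : x (Qidx j) ≠ 0) (hQk : x (Qidx k) ≠ 0) :
    pderiv6 (cubicGamma E) (Pidx i) x =
      2 * x (Pidx i) * (x (Qidx j)) ^ 2 * (x (Qidx k)) ^ 2 ∧
    (cubicGamma E x = 0 →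
      ∀ (γ : ℝ → Fin 6 → ℝ) (s₀ : ℝ), IsCubicSol E γ → γ s₀ = x →
        HasDerivAt (fun u => γ u (Qidx i))
          (2 * x (Pidx i) * (x (Qidx j)) ^ 2 * (x (Qidx k)) ^ 2) s₀ ∧
        2 * x (Pidx i) * (x (Qidx j)) ^ 2 * (x (Qidx k)) ^ 2 ≠ 0) := by
  have key := cubicGamma_update E x i j k hij hik hjk hQi
  have hd : pderiv6 (cubicGamma E) (Pidx i) x =
      2 * x (Pidx i) * (x (Qidx j)) ^ 2 * (x (Qidx k)) ^ 2 := by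
    unfold pderiv6
    simp only [key]
    have h := (((hasDerivAt_pow 2 (x (Pidx i))).sub_const 2).mul_const
      ((x (Qidx j)) ^ 2 * (x (Qidx k)) ^ 2)).deriv
    rw [h]
    push_cast
    ring
  refine ⟨hd, fun h0 γ s₀ hγ hs => ⟨?_, ?_⟩⟩
  · have h := (hγ s₀ i).1
    rw [hs, hd] at h
    exact h
  · have h := key (x (Pidx i))
    rw [Function.update_eq_self, h0] at h
    have hP : x (Pidx i) ≠ 0 := by
      intro hP
      rw [hP] at h
      have : 0 < (x (Qidx j)) ^ 2 * (x (Qidx k)) ^ 2 := by positivity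
      nlinarith
    positivity
end

section
/- If γ : ℝ → ℝ⁶ is a solution of the Hamiltonian system associated to the regularized Hamiltonian Γ, then the curve s ↦ S_f γ(s), whose components are (Q₃(s), −Q₁(s), Q₂(s), P₃(s), −P₁(s), P₂(s)), is also a solution of the same Hamiltonian system. -/
/-- The time-preserving symmetry matrix `S_f = diag(R, R)`, `R = [[0,0,1],[−1,0,0],[0,1,0]]`. -/
def Sf : Matrix (Fin 6) (Fin 6) ℝ :=
  !![0, 0, 1, 0, 0, 0;
     -1, 0, 0, 0, 0, 0;
     0, 1, 0, 0, 0, 0;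
     0, 0, 0, 0, 0, 1;
     0, 0, 0, -1, 0, 0;
     0, 0, 0, 0, 1, 0]

/-- The time-reversing symmetry matrix `S_r = diag(S, −S)`, `S = [[0,1,0],[1,0,0],[0,0,1]]`. -/
def Sr : Matrix (Fin 6) (Fin 6) ℝ :=
  !![0, 1, 0, 0, 0, 0;
     1, 0, 0, 0, 0, 0;
     0, 0, 1, 0, 0, 0;
     0, 0, 0, 0, -1, 0;
     0, 0, 0, -1, 0, 0;
     0, 0, 0, 0, 0, -1]

theorem Sf_mulVec (x : Fin 6 → ℝ) :
    Sf.mulVec x = ![x 2, -x 0, x 1, x 5, -x 3, x 4] := by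
  funext i
  fin_cases i <;> simp [Sf, Matrix.mulVec, dotProduct, Fin.sum_univ_six]

theorem cubicGamma_Sf (E : ℝ) (x : Fin 6 → ℝ) :
    cubicGamma E (Sf.mulVec x) = cubicGamma E x := by
  rw [Sf_mulVec]
  have e4 : (-x 0) ^ 4 = x 0 ^ 4 := by ring
  have h1 : x 2 ^ 4 + x 0 ^ 4 + x 1 ^ 4 = x 0 ^ 4 + x 1 ^ 4 + x 2 ^ 4 := by ring
  have h2 : x 2 ^ 4 + x 0 ^ 4 = x 0 ^ 4 + x 2 ^ 4 := by ring
  have h3 : x 2 ^ 4 + x 1 ^ 4 = x 1 ^ 4 + x 2 ^ 4 := by ring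
  change x 5 ^ 2 * (-x 0) ^ 2 * x 1 ^ 2 + x 2 ^ 2 * (-x 3) ^ 2 * x 1 ^ 2
      + x 2 ^ 2 * (-x 0) ^ 2 * x 4 ^ 2
    - 2 * x 2 ^ 2 * (-x 0) ^ 2 * x 1 ^ 2 / Real.sqrt (x 2 ^ 4 + (-x 0) ^ 4 + x 1 ^ 4)
    - 2 * x 2 ^ 2 * (-x 0) ^ 2 * x 1 ^ 2 / Real.sqrt (x 2 ^ 4 + (-x 0) ^ 4)
    - 2 * x 2 ^ 2 * (-x 0) ^ 2 * x 1 ^ 2 / Real.sqrt (x 2 ^ 4 + x 1 ^ 4)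
    - 2 * x 2 ^ 2 * (-x 0) ^ 2 * x 1 ^ 2 / Real.sqrt ((-x 0) ^ 4 + x 1 ^ 4)
    - 2 * (-x 0) ^ 2 * x 1 ^ 2 - 2 * x 2 ^ 2 * x 1 ^ 2 - 2 * x 2 ^ 2 * (-x 0) ^ 2
    - E * x 2 ^ 2 * (-x 0) ^ 2 * x 1 ^ 2 = _
  rw [e4, h1, h2, h3]
  unfold cubicGamma
  ring

/-- Transport of a partial derivative when `S_f` sends coordinate `j` to coordinate `i`. -/
theorem pderiv6_Sf_pos (E : ℝ) (x : Fin 6 → ℝ) (i j : Fin 6)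
    (hx : Sf.mulVec x i = x j)
    (h : ∀ t, Function.update (Sf.mulVec x) i t = Sf.mulVec (Function.update x j t)) :
    pderiv6 (cubicGamma E) i (Sf.mulVec x) = pderiv6 (cubicGamma E) j x := by
  unfold pderiv6
  simp only [h, cubicGamma_Sf, hx]

/-- The same with a sign. -/
theorem pderiv6_Sf_neg (E : ℝ) (x : Fin 6 → ℝ) (i j : Fin 6)
    (hx : Sf.mulVec x i = -x j)
    (h : ∀ t, Function.update (Sf.mulVec x) i t = Sf.mulVec (Function.update x j (-t))) :
    pderiv6 (cubicGamma E) i (Sf.mulVec x) = -pderiv6 (cubicGamma E) j x := by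
  unfold pderiv6
  simp only [h, cubicGamma_Sf, hx]
  rw [deriv_comp_neg (fun t => cubicGamma E (Function.update x j t)), neg_neg]

theorem pderiv6_Sf_0 (E : ℝ) (x : Fin 6 → ℝ) :
    pderiv6 (cubicGamma E) 0 (Sf.mulVec x) = pderiv6 (cubicGamma E) 2 x := by
  apply pderiv6_Sf_pos
  · rw [Sf_mulVec]; rfl
  · intro t
    rw [Sf_mulVec, Sf_mulVec]
    funext k
    fin_cases k <;> simp [Function.update]

theorem pderiv6_Sf_1 (E : ℝ) (x : Fin 6 → ℝ) :
    pderiv6 (cubicGamma E) 1 (Sf.mulVec x) = -pderiv6 (cubicGamma E) 0 x := by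
  apply pderiv6_Sf_neg
  · rw [Sf_mulVec]; rfl
  · intro t
    rw [Sf_mulVec, Sf_mulVec]
    funext k
    fin_cases k <;> simp [Function.update]

theorem pderiv6_Sf_2 (E : ℝ) (x : Fin 6 → ℝ) :
    pderiv6 (cubicGamma E) 2 (Sf.mulVec x) = pderiv6 (cubicGamma E) 1 x := by
  apply pderiv6_Sf_pos
  · rw [Sf_mulVec]; rfl
  · intro t
    rw [Sf_mulVec, Sf_mulVec]
    funext k
    fin_cases k <;> simp [Function.update]

theorem pderiv6_Sf_3 (E : ℝ) (x : Fin 6 → ℝ) :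
    pderiv6 (cubicGamma E) 3 (Sf.mulVec x) = pderiv6 (cubicGamma E) 5 x := by
  apply pderiv6_Sf_pos
  · rw [Sf_mulVec]; rfl
  · intro t
    rw [Sf_mulVec, Sf_mulVec]
    funext k
    fin_cases k <;> simp [Function.update]

theorem pderiv6_Sf_4 (E : ℝ) (x : Fin 6 → ℝ) :
    pderiv6 (cubicGamma E) 4 (Sf.mulVec x) = -pderiv6 (cubicGamma E) 3 x := by
  apply pderiv6_Sf_neg
  · rw [Sf_mulVec]; rfl
  · intro t
    rw [Sf_mulVec, Sf_mulVec]
    funext k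
    fin_cases k <;> simp [Function.update]

theorem pderiv6_Sf_5 (E : ℝ) (x : Fin 6 → ℝ) :
    pderiv6 (cubicGamma E) 5 (Sf.mulVec x) = pderiv6 (cubicGamma E) 4 x := by
  apply pderiv6_Sf_pos
  · rw [Sf_mulVec]; rfl
  · intro t
    rw [Sf_mulVec, Sf_mulVec]
    funext k
    fin_cases k <;> simp [Function.update]

/-- If `γ` is a solution of the Hamiltonian system associated to the regularized
Hamiltonian `Γ`, then `s ↦ S_f γ(s)`, with components
`(Q₃(s), −Q₁(s), Q₂(s), P₃(s), −P₁(s), P₂(s))`, is also a solution. -/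
theorem Sf_symmetry (E : ℝ) (γ : ℝ → Fin 6 → ℝ) (hγ : IsCubicSol E γ) :
    IsCubicSol E (fun s => Sf.mulVec (γ s)) := by
  intro s
  obtain ⟨a0, b0⟩ := hγ s 0
  obtain ⟨a1, b1⟩ := hγ s 1
  obtain ⟨a2, b2⟩ := hγ s 2
  have q0 : Qidx 0 = 0 := rfl
  have q1 : Qidx 1 = 1 := rfl
  have q2 : Qidx 2 = 2 := rfl
  have p0 : Pidx 0 = 3 := rfl
  have p1 : Pidx 1 = 4 := rfl
  have p2 : Pidx 2 = 5 := rfl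
  rw [q0, p0] at a0 b0
  rw [q1, p1] at a1 b1
  rw [q2, p2] at a2 b2
  rw [Fin.forall_fin_succ, Fin.forall_fin_two]
  change (HasDerivAt (fun u => Sf.mulVec (γ u) 0) (pderiv6 (cubicGamma E) 3 (Sf.mulVec (γ s))) s ∧
      HasDerivAt (fun u => Sf.mulVec (γ u) 3) (-pderiv6 (cubicGamma E) 0 (Sf.mulVec (γ s))) s) ∧
    (HasDerivAt (fun u => Sf.mulVec (γ u) 1) (pderiv6 (cubicGamma E) 4 (Sf.mulVec (γ s))) s ∧
      HasDerivAt (fun u => Sf.mulVec (γ u) 4) (-pderiv6 (cubicGamma E) 1 (Sf.mulVec (γ s))) s) ∧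
    (HasDerivAt (fun u => Sf.mulVec (γ u) 2) (pderiv6 (cubicGamma E) 5 (Sf.mulVec (γ s))) s ∧
      HasDerivAt (fun u => Sf.mulVec (γ u) 5) (-pderiv6 (cubicGamma E) 2 (Sf.mulVec (γ s))) s)
  rw [pderiv6_Sf_0, pderiv6_Sf_1, pderiv6_Sf_2, pderiv6_Sf_3, pderiv6_Sf_4, pderiv6_Sf_5]
  simp only [Sf_mulVec]
  exact ⟨⟨a2, b2⟩, ⟨a0.neg, b0.neg⟩, ⟨a1, b1⟩⟩
end

section
/- If γ : ℝ → ℝ⁶ is a solution of the Hamiltonian system associated to the regularized Hamiltonian Γ, then the time-reversed curve s ↦ S_r γ(−s), whose components are (Q₂(−s), Q₁(−s), Q₃(−s), −P₂(−s), −P₁(−s), −P₃(−s)), is also a solution of the same Hamiltonian system. -/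
lemma Sr_mulVec_eq (x : Fin 6 → ℝ) :
    Sr.mulVec x = ![x 1, x 0, x 2, -x 4, -x 3, -x 5] := by
  ext i
  fin_cases i <;> simp [Sr, Matrix.mulVec, dotProduct, Fin.sum_univ_succ] <;> rfl

lemma cubicGamma_Sr (E : ℝ) (x : Fin 6 → ℝ) :
    cubicGamma E (Sr.mulVec x) = cubicGamma E x := by
  have h0 : Sr.mulVec x 0 = x 1 := by rw [Sr_mulVec_eq]; rfl
  have h1 : Sr.mulVec x 1 = x 0 := by rw [Sr_mulVec_eq]; rfl
  have h2 : Sr.mulVec x 2 = x 2 := by rw [Sr_mulVec_eq]; rfl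
  have h3 : Sr.mulVec x 3 = -x 4 := by rw [Sr_mulVec_eq]; rfl
  have h4 : Sr.mulVec x 4 = -x 3 := by rw [Sr_mulVec_eq]; rfl
  have h5 : Sr.mulVec x 5 = -x 5 := by rw [Sr_mulVec_eq]; rfl
  unfold cubicGamma
  rw [h0, h1, h2, h3, h4, h5, add_comm ((x 1) ^ 4) ((x 0) ^ 4)]
  ring

/-- The permutation of the three coordinates induced by `S`. -/
def srPerm : Fin 3 → Fin 3 := ![1, 0, 2]

lemma Sr_Q (x : Fin 6 → ℝ) (i : Fin 3) : Sr.mulVec x (Qidx i) = x (Qidx (srPerm i)) := by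
  rw [Sr_mulVec_eq]; fin_cases i <;> rfl

lemma Sr_P (x : Fin 6 → ℝ) (i : Fin 3) : Sr.mulVec x (Pidx i) = -x (Pidx (srPerm i)) := by
  rw [Sr_mulVec_eq]; fin_cases i <;> rfl

lemma update_Q (x : Fin 6 → ℝ) (i : Fin 3) (t : ℝ) :
    Function.update (Sr.mulVec x) (Qidx i) t =
      Sr.mulVec (Function.update x (Qidx (srPerm i)) t) := by
  rw [Sr_mulVec_eq, Sr_mulVec_eq]
  ext j
  fin_cases i <;> fin_cases j <;> simp [Qidx, srPerm, Function.update_apply, Fin.ext_iff]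

lemma update_P (x : Fin 6 → ℝ) (i : Fin 3) (t : ℝ) :
    Function.update (Sr.mulVec x) (Pidx i) t =
      Sr.mulVec (Function.update x (Pidx (srPerm i)) (-t)) := by
  rw [Sr_mulVec_eq, Sr_mulVec_eq]
  ext j
  fin_cases i <;> fin_cases j <;> simp [Pidx, srPerm, Function.update_apply, Fin.ext_iff]

lemma pderiv6_Q (E : ℝ) (x : Fin 6 → ℝ) (i : Fin 3) :
    pderiv6 (cubicGamma E) (Qidx i) (Sr.mulVec x) =
      pderiv6 (cubicGamma E) (Qidx (srPerm i)) x := by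
  simp only [pderiv6, update_Q, cubicGamma_Sr, Sr_Q]

lemma pderiv6_P (E : ℝ) (x : Fin 6 → ℝ) (i : Fin 3) :
    pderiv6 (cubicGamma E) (Pidx i) (Sr.mulVec x) =
      -pderiv6 (cubicGamma E) (Pidx (srPerm i)) x := by
  simp only [pderiv6, update_P, cubicGamma_Sr, Sr_P]
  rw [deriv_comp_neg (fun t => cubicGamma E (Function.update x (Pidx (srPerm i)) t)), neg_neg]

/-- If `γ` is a solution of the Hamiltonian system associated to the regularized
Hamiltonian `Γ`, then the time-reversed curve `s ↦ S_r γ(−s)`, with components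
`(Q₂(−s), Q₁(−s), Q₃(−s), −P₂(−s), −P₁(−s), −P₃(−s))`, is also a solution. -/
theorem Sr_symmetry (E : ℝ) (γ : ℝ → Fin 6 → ℝ) (hγ : IsCubicSol E γ) :
    IsCubicSol E (fun s => Sr.mulVec (γ (-s))) := by
  intro s i
  obtain ⟨hQ, hP⟩ := hγ (-s) (srPerm i)
  have hn : HasDerivAt (fun u : ℝ => -u) (-1) s := hasDerivAt_neg s
  simp only [Sr_Q, Sr_P, pderiv6_Q, pderiv6_P]
  constructor
  · simpa [Function.comp_def] using HasDerivAt.comp s hQ hn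
  · simpa [Function.comp_def] using (HasDerivAt.comp s hP hn).fun_neg
end

section
/- Suppose γ : ℝ → ℝ⁶ is a solution of the Hamiltonian system associated to the regularized Hamiltonian Γ (with fixed energy E < 0) satisfying, for some τ > 0 and some α, β ∈ ℝ, γ(0) = (0, α, α, √2, −β, β) and γ(2τ) = (α, 0, α, β, −√2, −β). Then γ satisfies γ(s + 2τ) = S_f γ(s) for all s ∈ ℝ, and consequently γ is 12τ-periodic: γ(s + 12τ) = γ(s) for all s ∈ ℝ. -/
namespace CubicAux

open NNReal

/-- A function on the line with derivative bounded by `C` is `C`-Lipschitz. -/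
lemma lip1 (f f' : ℝ → ℝ) (C : ℝ≥0) (h : ∀ x, HasDerivAt f (f' x) x)
    (hb : ∀ x, |f' x| ≤ C) : LipschitzWith C f := by
  apply lipschitzWith_of_nnnorm_deriv_le (fun x => (h x).differentiableAt)
  intro x
  rw [(h x).deriv, ← NNReal.coe_le_coe, coe_nnnorm, Real.norm_eq_abs]
  exact hb x

lemma mono_bound {x y r : ℝ} (hx : |x| ≤ r) (hy : |y| ≤ r) (a b : ℕ) :
    |x ^ a * y ^ b| ≤ r ^ (a + b) := by
  rw [abs_mul, abs_pow, abs_pow, pow_add]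
  have : 0 ≤ r := (abs_nonneg x).trans hx
  gcongr

lemma mono_bound3 {x y z r : ℝ} (hx : |x| ≤ r) (hy : |y| ≤ r) (hz : |z| ≤ r) (a b c : ℕ) :
    |x ^ a * y ^ b * z ^ c| ≤ r ^ (a + b + c) := by
  rw [abs_mul, abs_pow, pow_add]
  have : 0 ≤ r := (abs_nonneg x).trans hx
  have := mono_bound hx hy a b
  gcongr

lemma abs_div_le {u w : ℝ} (hw : 0 < w) (h : |u| ≤ w) : |u / w| ≤ 1 := by
  rw [abs_div, abs_of_pos hw]
  exact (div_le_one hw).2 h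

/-- `x y⁶ / (x⁴+y⁴)^{3/2}` -/
noncomputable def A (x y : ℝ) : ℝ := x * y ^ 6 / Real.sqrt (x ^ 4 + y ^ 4) ^ 3

/-- `a b / √(a²+b²)` -/
noncomputable def G (a b : ℝ) : ℝ := a * b / Real.sqrt (a ^ 2 + b ^ 2)

/-- `b c (b²+c²) / (a²+b²+c²)^{3/2}` -/
noncomputable def H (a b c : ℝ) : ℝ :=
  b * c * (b ^ 2 + c ^ 2) / Real.sqrt (a ^ 2 + b ^ 2 + c ^ 2) ^ 3

lemma hasDerivAt_s (k x : ℝ) (h : 0 < x ^ 4 + k) :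
    HasDerivAt (fun t => Real.sqrt (t ^ 4 + k)) (2 * x ^ 3 / Real.sqrt (x ^ 4 + k)) x := by
  have := ((hasDerivAt_pow 4 x).add_const k).sqrt h.ne'
  convert this using 1
  have := Real.sqrt_pos.2 h
  field_simp
  norm_num

lemma hasDerivAt_s2 (k x : ℝ) (h : 0 < x ^ 2 + k) :
    HasDerivAt (fun t => Real.sqrt (t ^ 2 + k)) (x / Real.sqrt (x ^ 2 + k)) x := by
  have := ((hasDerivAt_pow 2 x).add_const k).sqrt h.ne'
  convert this using 1
  have := Real.sqrt_pos.2 h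
  field_simp
  norm_num
  ring

lemma pow4_pos_left {x : ℝ} (h : x ≠ 0) (y : ℝ) : 0 < x ^ 4 + y ^ 4 := by positivity
lemma pow4_pos_right (x : ℝ) {y : ℝ} (h : y ≠ 0) : 0 < x ^ 4 + y ^ 4 := by positivity

lemma exists_r4 {x y : ℝ} (h : 0 < x ^ 4 + y ^ 4) :
    ∃ r : ℝ, 0 < r ∧ Real.sqrt (x ^ 4 + y ^ 4) = r ^ 2 ∧ |x| ≤ r ∧ |y| ≤ r := by
  have hs := Real.sqrt_pos.2 h
  refine ⟨Real.sqrt (Real.sqrt (x ^ 4 + y ^ 4)), Real.sqrt_pos.2 hs, (Real.sq_sqrt hs.le).symm,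
    ?_, ?_⟩
  · apply Real.abs_le_sqrt
    apply Real.le_sqrt_of_sq_le
    have : 0 ≤ y ^ 4 := by positivity
    nlinarith
  · apply Real.abs_le_sqrt
    apply Real.le_sqrt_of_sq_le
    have : 0 ≤ x ^ 4 := by positivity
    nlinarith

lemma A_lip_x (y : ℝ) : LipschitzWith 12 (fun x => A x y) := by
  by_cases hy : y = 0
  · subst hy
    have : (fun x => A x 0) = fun _ => 0 := by ext x; simp [A]
    rw [this]
    exact (LipschitzWith.const 0).weaken (by simp)
  refine lip1 _ (fun x => y ^ 6 / Real.sqrt (x ^ 4 + y ^ 4) ^ 3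
    - 6 * (x ^ 4 * y ^ 6 / Real.sqrt (x ^ 4 + y ^ 4) ^ 5)) _ ?_ ?_
  · intro x
    have hp := pow4_pos_right x hy
    have hs := Real.sqrt_pos.2 hp
    have := ((hasDerivAt_id x).mul_const (y ^ 6)).div ((hasDerivAt_s _ x hp).pow 3)
      (by simp only [Pi.pow_apply]; positivity)
    unfold A
    refine this.congr_deriv ?_
    simp only [Pi.pow_apply, id]
    field_simp
    norm_num
    try ring
  · intro x
    obtain ⟨r, hr, hs, hx, hy'⟩ := exists_r4 (pow4_pos_right x hy)
    simp only [hs]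
    have h1 : |y ^ 6 / (r ^ 2) ^ 3| ≤ 1 := abs_div_le (by positivity) (by
      simpa [← pow_mul] using mono_bound hx hy' 0 6)
    have h2 : |x ^ 4 * y ^ 6 / (r ^ 2) ^ 5| ≤ 1 := abs_div_le (by positivity) (by
      simpa [← pow_mul] using mono_bound hx hy' 4 6)
    rw [abs_le] at *
    norm_num
    constructor <;> linarith [h1.1, h1.2, h2.1, h2.2]

lemma A_lip_y (x : ℝ) : LipschitzWith 12 (fun y => A x y) := by
  by_cases hx : x = 0
  · subst hx
    have : (fun x => A 0 x) = fun _ => 0 := by ext x; simp [A]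
    rw [this]
    exact (LipschitzWith.const 0).weaken (by simp)
  refine lip1 _ (fun y => 6 * (x ^ 1 * y ^ 5 / Real.sqrt (x ^ 4 + y ^ 4) ^ 3)
    - 6 * (x ^ 1 * y ^ 9 / Real.sqrt (x ^ 4 + y ^ 4) ^ 5)) _ ?_ ?_
  · intro y
    have hp := pow4_pos_left hx y
    have hs := Real.sqrt_pos.2 hp
    rw [add_comm] at hp
    have := ((hasDerivAt_pow 6 y).const_mul x).div ((hasDerivAt_s _ y hp).pow 3)
      (by rw [add_comm] at hp; simp only [add_comm _ (x ^ 4), Pi.pow_apply]; positivity)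
    unfold A
    simp only [add_comm _ (x ^ 4)] at this
    refine this.congr_deriv ?_
    simp only [Pi.pow_apply]
    field_simp
    norm_num
    try ring
  · intro y
    obtain ⟨r, hr, hs, hx, hy'⟩ := exists_r4 (pow4_pos_left hx y)
    simp only [hs]
    have h1 : |x ^ 1 * y ^ 5 / (r ^ 2) ^ 3| ≤ 1 := abs_div_le (by positivity) (by
      simpa only [← pow_mul] using mono_bound hx hy' 1 5)
    have h2 : |x ^ 1 * y ^ 9 / (r ^ 2) ^ 5| ≤ 1 := abs_div_le (by positivity) (by
      simpa only [← pow_mul] using mono_bound hx hy' 1 9)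
    rw [abs_le] at *
    norm_num
    norm_num at h1 h2
    constructor <;> linarith [h1.1, h1.2, h2.1, h2.2]

lemma A_ll : LocallyLipschitz (Function.uncurry A) :=
  (LipschitzWith.uncurry A_lip_x A_lip_y).locallyLipschitz

lemma G_lip_x (b : ℝ) : LipschitzWith 1 (fun a => G a b) := by
  by_cases hy : b = 0
  · subst hy
    have : (fun x => G x 0) = fun _ => 0 := by ext x; simp [G]
    rw [this]
    exact (LipschitzWith.const 0).weaken (by simp)
  refine lip1 _ (fun a => b ^ 3 / Real.sqrt (a ^ 2 + b ^ 2) ^ 3) _ ?_ ?_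
  · intro a
    have hp : 0 < a ^ 2 + b ^ 2 := by positivity
    have hs := Real.sqrt_pos.2 hp
    have hsq := Real.sq_sqrt hp.le
    have := ((hasDerivAt_id a).mul_const b).div (hasDerivAt_s2 _ a hp) hs.ne'
    unfold G
    refine this.congr_deriv ?_
    simp only [id]
    field_simp
    rw [hsq]
    ring
  · intro a
    have hp : 0 < a ^ 2 + b ^ 2 := by positivity
    have hs := Real.sqrt_pos.2 hp
    have hb : |b| ≤ Real.sqrt (a ^ 2 + b ^ 2) := Real.abs_le_sqrt (by nlinarith)
    have := abs_div_le (by positivity) (mono_bound hb hb 0 3)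
    simpa using this

lemma G_comm (a b : ℝ) : G a b = G b a := by
  unfold G; rw [add_comm, mul_comm]

lemma G_ll : LocallyLipschitz (Function.uncurry G) :=
  (LipschitzWith.uncurry G_lip_x (fun a => by
    have := G_lip_x a
    simp only [G_comm _ a] at this
    exact this)).locallyLipschitz

lemma H_comm (a b c : ℝ) : H a b c = H a c b := by
  unfold H; rw [add_right_comm, mul_comm b, add_comm (b ^ 2)]

lemma H_lip_a (b c : ℝ) : LipschitzWith 10 (fun a => H a b c) := by
  by_cases hb : b = 0
  · subst hb
    have : (fun x => H x 0 c) = fun _ => 0 := by ext x; simp [H]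
    rw [this]
    exact (LipschitzWith.const 0).weaken (by simp)
  refine lip1 _ (fun a => -3 * (a ^ 1 * b ^ 3 * c ^ 1 / Real.sqrt (a ^ 2 + (b ^ 2 + c ^ 2)) ^ 5)
    - 3 * (a ^ 1 * b ^ 1 * c ^ 3 / Real.sqrt (a ^ 2 + (b ^ 2 + c ^ 2)) ^ 5)) _ ?_ ?_
  · intro a
    have hp : 0 < a ^ 2 + (b ^ 2 + c ^ 2) := by positivity
    have hs := Real.sqrt_pos.2 hp
    have := (hasDerivAt_const a (b * c * (b ^ 2 + c ^ 2))).div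
      ((hasDerivAt_s2 _ a hp).pow 3) (by simp only [Pi.pow_apply]; positivity)
    unfold H
    simp only [add_assoc]
    refine this.congr_deriv ?_
    simp only [Pi.pow_apply]
    field_simp
    norm_num
    try ring
  · intro a
    have hp : 0 < a ^ 2 + (b ^ 2 + c ^ 2) := by positivity
    have hs := Real.sqrt_pos.2 hp
    have ha : |a| ≤ Real.sqrt (a ^ 2 + (b ^ 2 + c ^ 2)) := Real.abs_le_sqrt (by nlinarith)
    have hb : |b| ≤ Real.sqrt (a ^ 2 + (b ^ 2 + c ^ 2)) := Real.abs_le_sqrt (by nlinarith)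
    have hc : |c| ≤ Real.sqrt (a ^ 2 + (b ^ 2 + c ^ 2)) := Real.abs_le_sqrt (by nlinarith)
    have h1 := abs_div_le (by positivity) (mono_bound3 ha hb hc 1 3 1)
    have h2 := abs_div_le (by positivity) (mono_bound3 ha hb hc 1 1 3)
    rw [abs_le] at *
    norm_num
    norm_num at h1 h2
    constructor <;> linarith [h1.1, h1.2, h2.1, h2.2]

lemma H_lip_b (a c : ℝ) : LipschitzWith 10 (fun b => H a b c) := by
  by_cases hc : c = 0
  · subst hc
    have : (fun x => H a x 0) = fun _ => 0 := by ext x; simp [H]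
    rw [this]
    exact (LipschitzWith.const 0).weaken (by simp)
  refine lip1 _ (fun b => 3 * (a ^ 0 * b ^ 2 * c ^ 1 / Real.sqrt (b ^ 2 + (a ^ 2 + c ^ 2)) ^ 3)
    + (a ^ 0 * b ^ 0 * c ^ 3 / Real.sqrt (b ^ 2 + (a ^ 2 + c ^ 2)) ^ 3)
    - 3 * (a ^ 0 * b ^ 4 * c ^ 1 / Real.sqrt (b ^ 2 + (a ^ 2 + c ^ 2)) ^ 5)
    - 3 * (a ^ 0 * b ^ 2 * c ^ 3 / Real.sqrt (b ^ 2 + (a ^ 2 + c ^ 2)) ^ 5)) _ ?_ ?_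
  · intro b
    have hp : 0 < b ^ 2 + (a ^ 2 + c ^ 2) := by positivity
    have hs := Real.sqrt_pos.2 hp
    have := ((((hasDerivAt_id b).mul_const c).mul ((hasDerivAt_pow 2 b).add_const (c ^ 2)))).div
      ((hasDerivAt_s2 _ b hp).pow 3) (by simp only [Pi.pow_apply]; positivity)
    unfold H
    simp only [add_comm (a ^ 2), add_assoc] at this hs ⊢
    refine this.congr_deriv ?_
    simp only [Pi.pow_apply, Pi.mul_apply, id]
    field_simp
    norm_num
    try ring
  · intro b
    have hp : 0 < b ^ 2 + (a ^ 2 + c ^ 2) := by positivity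
    have hs := Real.sqrt_pos.2 hp
    have ha : |a| ≤ Real.sqrt (b ^ 2 + (a ^ 2 + c ^ 2)) := Real.abs_le_sqrt (by nlinarith)
    have hb : |b| ≤ Real.sqrt (b ^ 2 + (a ^ 2 + c ^ 2)) := Real.abs_le_sqrt (by nlinarith)
    have hc : |c| ≤ Real.sqrt (b ^ 2 + (a ^ 2 + c ^ 2)) := Real.abs_le_sqrt (by nlinarith)
    have h1 := abs_div_le (by positivity) (mono_bound3 ha hb hc 0 2 1)
    have h2 := abs_div_le (by positivity) (mono_bound3 ha hb hc 0 0 3)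
    have h3 := abs_div_le (by positivity) (mono_bound3 ha hb hc 0 4 1)
    have h4 := abs_div_le (by positivity) (mono_bound3 ha hb hc 0 2 3)
    rw [abs_le] at *
    norm_num
    norm_num at h1 h2 h3 h4
    constructor <;> linarith [h1.1, h1.2, h2.1, h2.2, h3.1, h3.2, h4.1, h4.2]

lemma H_lip_c (a b : ℝ) : LipschitzWith 10 (fun c => H a b c) := by
  have := H_lip_b a b
  simp only [H_comm a _ b] at this
  exact this

lemma H_ll : LocallyLipschitz (fun p : ℝ × ℝ × ℝ => H p.1 p.2.1 p.2.2) := by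
  have := (LipschitzWith.uncurry (f := fun a (q : ℝ × ℝ) => H a q.1 q.2)
    (fun q => H_lip_a q.1 q.2)
    (fun a => (LipschitzWith.uncurry (f := fun b c => H a b c) (fun c => H_lip_b a c)
      (fun b => H_lip_c a b)))).locallyLipschitz
  exact this

lemma hasDerivAt_two (x y : ℝ) :
    HasDerivAt (fun t => t ^ 2 * y ^ 2 / Real.sqrt (t ^ 4 + y ^ 4)) (2 * A x y) x := by
  by_cases hy : y = 0
  · subst hy
    simpa [A] using hasDerivAt_const x (0 : ℝ)
  have hp := pow4_pos_right x hy
  have hs := Real.sqrt_pos.2 hp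
  have hsq := Real.sq_sqrt hp.le
  have := ((hasDerivAt_pow 2 x).mul_const (y ^ 2)).div (hasDerivAt_s _ x hp) hs.ne'
  refine this.congr_deriv ?_
  unfold A
  field_simp
  rw [hsq]
  norm_num
  try ring

lemma hasDerivAt_three (x y z : ℝ) :
    HasDerivAt (fun t => t ^ 2 * y ^ 2 * z ^ 2 / Real.sqrt (t ^ 4 + y ^ 4 + z ^ 4))
      (2 * x * H (x ^ 2) (y ^ 2) (z ^ 2)) x := by
  by_cases hy : y = 0
  · subst hy
    simpa [H] using hasDerivAt_const x (0 : ℝ)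
  have hp : 0 < x ^ 4 + (y ^ 4 + z ^ 4) := by positivity
  have hs := Real.sqrt_pos.2 hp
  have hsq := Real.sq_sqrt hp.le
  have := (((hasDerivAt_pow 2 x).mul_const (y ^ 2)).mul_const (z ^ 2)).div
    (hasDerivAt_s _ x hp) hs.ne'
  simp only [add_assoc]
  refine this.congr_deriv ?_
  unfold H
  simp only [← pow_mul, add_assoc]
  norm_num
  field_simp
  rw [hsq]
  ring

/-- The `Q`-derivative of the Hamiltonian. -/
noncomputable def D (E x y z py pz : ℝ) : ℝ :=
  2 * x * (py ^ 2 * z ^ 2 + y ^ 2 * pz ^ 2) - 4 * (x * H (x ^ 2) (y ^ 2) (z ^ 2))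
    - 4 * z ^ 2 * A x y - 4 * y ^ 2 * A x z - 4 * x * G (y ^ 2) (z ^ 2)
    - 4 * x * z ^ 2 - 4 * x * y ^ 2 - 2 * E * x * y ^ 2 * z ^ 2

lemma hasDerivAt_D (E x y z p py pz : ℝ) :
    HasDerivAt (fun t => p ^ 2 * y ^ 2 * z ^ 2 + t ^ 2 * py ^ 2 * z ^ 2 + t ^ 2 * y ^ 2 * pz ^ 2
      - 2 * t ^ 2 * y ^ 2 * z ^ 2 / Real.sqrt (t ^ 4 + y ^ 4 + z ^ 4)
      - 2 * t ^ 2 * y ^ 2 * z ^ 2 / Real.sqrt (t ^ 4 + y ^ 4)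
      - 2 * t ^ 2 * y ^ 2 * z ^ 2 / Real.sqrt (t ^ 4 + z ^ 4)
      - 2 * t ^ 2 * y ^ 2 * z ^ 2 / Real.sqrt (y ^ 4 + z ^ 4)
      - 2 * y ^ 2 * z ^ 2 - 2 * t ^ 2 * z ^ 2 - 2 * t ^ 2 * y ^ 2 - E * t ^ 2 * y ^ 2 * z ^ 2)
      (D E x y z py pz) x := by
  have h2 := hasDerivAt_pow 2 x
  have h := ((((h2.mul_const (py ^ 2 * z ^ 2 + y ^ 2 * pz ^ 2 - 2 * G (y ^ 2) (z ^ 2)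
    - 2 * z ^ 2 - 2 * y ^ 2 - E * y ^ 2 * z ^ 2)).sub ((hasDerivAt_three x y z).const_mul 2)).sub
    ((hasDerivAt_two x y).const_mul (2 * z ^ 2))).sub
    ((hasDerivAt_two x z).const_mul (2 * y ^ 2))).add_const
      (p ^ 2 * y ^ 2 * z ^ 2 - 2 * y ^ 2 * z ^ 2)
  refine (h.congr_deriv ?_).congr_of_eventuallyEq (Filter.Eventually.of_forall ?_)
  · unfold D; norm_num; ring
  · intro t
    simp only [G, ← pow_mul, Pi.sub_apply]
    norm_num
    ring

/-- The Hamiltonian vector field. -/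
noncomputable def V (E : ℝ) (x : Fin 6 → ℝ) : Fin 6 → ℝ :=
  ![2 * x 3 * x 1 ^ 2 * x 2 ^ 2, 2 * x 4 * x 0 ^ 2 * x 2 ^ 2, 2 * x 5 * x 0 ^ 2 * x 1 ^ 2,
    -D E (x 0) (x 1) (x 2) (x 4) (x 5), -D E (x 1) (x 0) (x 2) (x 3) (x 5),
    -D E (x 2) (x 0) (x 1) (x 3) (x 4)]

lemma pd0 (E : ℝ) (x : Fin 6 → ℝ) :
    pderiv6 (cubicGamma E) 0 x = D E (x 0) (x 1) (x 2) (x 4) (x 5) := by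
  unfold pderiv6
  refine ((hasDerivAt_D E (x 0) (x 1) (x 2) (x 3) (x 4) (x 5)).congr_of_eventuallyEq
    (Filter.Eventually.of_forall ?_)).deriv
  intro t
  simp [cubicGamma, Function.update]

lemma pd1 (E : ℝ) (x : Fin 6 → ℝ) :
    pderiv6 (cubicGamma E) 1 x = D E (x 1) (x 0) (x 2) (x 3) (x 5) := by
  unfold pderiv6
  refine ((hasDerivAt_D E (x 1) (x 0) (x 2) (x 4) (x 3) (x 5)).congr_of_eventuallyEq
    (Filter.Eventually.of_forall ?_)).deriv
  intro t
  simp [cubicGamma, Function.update]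
  rw [add_comm (x 0 ^ 4) (t ^ 4)]
  ring

lemma pd2 (E : ℝ) (x : Fin 6 → ℝ) :
    pderiv6 (cubicGamma E) 2 x = D E (x 2) (x 0) (x 1) (x 3) (x 4) := by
  unfold pderiv6
  refine ((hasDerivAt_D E (x 2) (x 0) (x 1) (x 5) (x 3) (x 4)).congr_of_eventuallyEq
    (Filter.Eventually.of_forall ?_)).deriv
  intro t
  simp [cubicGamma, Function.update]
  rw [add_comm (x 0 ^ 4) (t ^ 4), add_comm (x 1 ^ 4) (t ^ 4),
    show x 0 ^ 4 + x 1 ^ 4 + t ^ 4 = t ^ 4 + x 0 ^ 4 + x 1 ^ 4 by ring]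
  ring

lemma hasDerivAt_P (c k x : ℝ) : HasDerivAt (fun t => t ^ 2 * c + k) (2 * x * c) x := by
  simpa using ((hasDerivAt_pow 2 x).mul_const c).add_const k

lemma pd3 (E : ℝ) (x : Fin 6 → ℝ) :
    pderiv6 (cubicGamma E) 3 x = 2 * x 3 * x 1 ^ 2 * x 2 ^ 2 := by
  unfold pderiv6
  rw [mul_assoc (2 * x 3)]
  refine ((hasDerivAt_P (x 1 ^ 2 * x 2 ^ 2) (cubicGamma E (Function.update x 3 0))
    (x 3)).congr_of_eventuallyEq (Filter.Eventually.of_forall ?_)).deriv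
  intro t
  simp [cubicGamma, Function.update]
  ring

lemma pd4 (E : ℝ) (x : Fin 6 → ℝ) :
    pderiv6 (cubicGamma E) 4 x = 2 * x 4 * x 0 ^ 2 * x 2 ^ 2 := by
  unfold pderiv6
  rw [mul_assoc (2 * x 4)]
  refine ((hasDerivAt_P (x 0 ^ 2 * x 2 ^ 2) (cubicGamma E (Function.update x 4 0))
    (x 4)).congr_of_eventuallyEq (Filter.Eventually.of_forall ?_)).deriv
  intro t
  simp [cubicGamma, Function.update]
  ring

lemma pd5 (E : ℝ) (x : Fin 6 → ℝ) :
    pderiv6 (cubicGamma E) 5 x = 2 * x 5 * x 0 ^ 2 * x 1 ^ 2 := by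
  unfold pderiv6
  rw [mul_assoc (2 * x 5)]
  refine ((hasDerivAt_P (x 0 ^ 2 * x 1 ^ 2) (cubicGamma E (Function.update x 5 0))
    (x 5)).congr_of_eventuallyEq (Filter.Eventually.of_forall ?_)).deriv
  intro t
  simp [cubicGamma, Function.update]
  ring

lemma sol_hasDerivAt {E : ℝ} {γ : ℝ → Fin 6 → ℝ} (h : IsCubicSol E γ) (s : ℝ) :
    HasDerivAt γ (V E (γ s)) s := by
  rw [hasDerivAt_pi]
  intro i
  have q0 := (h s 0).1
  have q1 := (h s 1).1
  have q2 := (h s 2).1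
  have p0 := (h s 0).2
  have p1 := (h s 1).2
  have p2 := (h s 2).2
  simp only [show Qidx 0 = 0 from rfl, show Qidx 1 = 1 from rfl, show Qidx 2 = 2 from rfl,
    show Pidx 0 = 3 from rfl, show Pidx 1 = 4 from rfl, show Pidx 2 = 5 from rfl,
    pd0, pd1, pd2, pd3, pd4, pd5] at q0 q1 q2 p0 p1 p2
  fin_cases i
  · exact q0
  · exact q1
  · exact q2
  · exact p0
  · exact p1
  · exact p2

section LL

variable {X : Type*} [PseudoEMetricSpace X] {f g h : X → ℝ}

lemma ll_mul (hf : LocallyLipschitz f) (hg : LocallyLipschitz g) :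
    LocallyLipschitz (fun x => f x * g x) :=
  (ContDiff.locallyLipschitz (𝕂 := ℝ) (f := fun p : ℝ × ℝ => p.1 * p.2)
    (by fun_prop)).comp (hf.prodMk hg)

lemma ll_sub (hf : LocallyLipschitz f) (hg : LocallyLipschitz g) :
    LocallyLipschitz (fun x => f x - g x) :=
  (ContDiff.locallyLipschitz (𝕂 := ℝ) (f := fun p : ℝ × ℝ => p.1 - p.2)
    (by fun_prop)).comp (hf.prodMk hg)

lemma ll_neg (hf : LocallyLipschitz f) : LocallyLipschitz (fun x => - f x) :=
  (ContDiff.locallyLipschitz (𝕂 := ℝ) (f := fun p : ℝ => -p) (by fun_prop)).comp hf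

lemma ll_add (hf : LocallyLipschitz f) (hg : LocallyLipschitz g) :
    LocallyLipschitz (fun x => f x + g x) :=
  (ContDiff.locallyLipschitz (𝕂 := ℝ) (f := fun p : ℝ × ℝ => p.1 + p.2)
    (by fun_prop)).comp (hf.prodMk hg)

lemma ll_pow (hf : LocallyLipschitz f) (n : ℕ) : LocallyLipschitz (fun x => f x ^ n) :=
  (ContDiff.locallyLipschitz (𝕂 := ℝ) (f := fun p : ℝ => p ^ n) (by fun_prop)).comp hf

lemma ll_A (hf : LocallyLipschitz f) (hg : LocallyLipschitz g) :
    LocallyLipschitz (fun x => A (f x) (g x)) := A_ll.comp (hf.prodMk hg)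

lemma ll_G (hf : LocallyLipschitz f) (hg : LocallyLipschitz g) :
    LocallyLipschitz (fun x => G (f x) (g x)) := G_ll.comp (hf.prodMk hg)

lemma ll_H (hf : LocallyLipschitz f) (hg : LocallyLipschitz g) (hh : LocallyLipschitz h) :
    LocallyLipschitz (fun x => H (f x) (g x) (h x)) := H_ll.comp (hf.prodMk (hg.prodMk hh))

end LL

lemma ll_coord (i : Fin 6) : LocallyLipschitz (fun x : Fin 6 → ℝ => x i) :=
  ContDiff.locallyLipschitz (𝕂 := ℝ) (by fun_prop)

lemma ll_D (E : ℝ) {x y z p q : (Fin 6 → ℝ) → ℝ} (hx : LocallyLipschitz x)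
    (hy : LocallyLipschitz y) (hz : LocallyLipschitz z) (hp : LocallyLipschitz p)
    (hq : LocallyLipschitz q) :
    LocallyLipschitz (fun u => D E (x u) (y u) (z u) (p u) (q u)) := by
  have c : ∀ r : ℝ, LocallyLipschitz (fun _ : Fin 6 → ℝ => r) := LocallyLipschitz.const
  have x2 := ll_pow hx 2
  have y2 := ll_pow hy 2
  have z2 := ll_pow hz 2
  have p2 := ll_pow hp 2
  have q2 := ll_pow hq 2
  exact ll_sub (ll_sub (ll_sub (ll_sub (ll_sub (ll_sub (ll_sub
    (ll_mul (ll_mul (c 2) hx) (ll_add (ll_mul p2 z2) (ll_mul y2 q2)))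
    (ll_mul (c 4) (ll_mul hx (ll_H x2 y2 z2))))
    (ll_mul (ll_mul (c 4) z2) (ll_A hx hy)))
    (ll_mul (ll_mul (c 4) y2) (ll_A hx hz)))
    (ll_mul (ll_mul (c 4) hx) (ll_G y2 z2)))
    (ll_mul (ll_mul (c 4) hx) z2))
    (ll_mul (ll_mul (c 4) hx) y2))
    (ll_mul (ll_mul (ll_mul (c (2 * E)) hx) y2) z2)

lemma ll_poly (i j k : Fin 6) :
    LocallyLipschitz (fun x : Fin 6 → ℝ => 2 * x i * x j ^ 2 * x k ^ 2) :=
  ContDiff.locallyLipschitz (𝕂 := ℝ) (by fun_prop)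

lemma V_comp_ll (E : ℝ) (i : Fin 6) : LocallyLipschitz (fun x => V E x i) := by
  fin_cases i
  · exact ll_poly 3 1 2
  · exact ll_poly 4 0 2
  · exact ll_poly 5 0 1
  · exact ll_neg (ll_D E (ll_coord 0) (ll_coord 1) (ll_coord 2) (ll_coord 4) (ll_coord 5))
  · exact ll_neg (ll_D E (ll_coord 1) (ll_coord 0) (ll_coord 2) (ll_coord 3) (ll_coord 5))
  · exact ll_neg (ll_D E (ll_coord 2) (ll_coord 0) (ll_coord 1) (ll_coord 3) (ll_coord 4))

lemma V_lip (E : ℝ) (S : Set (Fin 6 → ℝ)) (hS : IsCompact S) :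
    ∃ K : ℝ≥0, LipschitzOnWith K (V E) S := by
  have : ∀ i, ∃ K : ℝ≥0, LipschitzOnWith K (fun x => V E x i) S := fun i =>
    (V_comp_ll E i).locallyLipschitzOn.exists_lipschitzOnWith_of_compact hS
  choose K hK using this
  refine ⟨∑ i, K i, fun x hx y hy => ?_⟩
  rw [edist_pi_le_iff]
  intro i
  refine (hK i hx hy).trans ?_
  gcongr
  exact Finset.single_le_sum (fun _ _ => zero_le) (Finset.mem_univ i)

lemma V_unique (E : ℝ) (f g : ℝ → Fin 6 → ℝ) (hf : ∀ s, HasDerivAt f (V E (f s)) s)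
    (hg : ∀ s, HasDerivAt g (V E (g s)) s) (h0 : f 0 = g 0) (s : ℝ) : f s = g s := by
  have cf : Continuous f := continuous_iff_continuousAt.2 fun s => (hf s).continuousAt
  have cg : Continuous g := continuous_iff_continuousAt.2 fun s => (hg s).continuousAt
  let I := Set.Icc (-(|s| + 1)) (|s| + 1)
  have hI : IsCompact I := isCompact_Icc
  obtain ⟨K, hK⟩ := V_lip E (f '' I ∪ g '' I) ((hI.image cf).union (hI.image cg))
  have ha := abs_nonneg s
  refine ODE_solution_unique_of_mem_Icc (v := fun _ => V E) (s := fun _ => f '' I ∪ g '' I)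
    (K := K) (t₀ := 0) (a := -(|s| + 1)) (b := |s| + 1) (fun _ _ => hK) ⟨by linarith, by linarith⟩
    cf.continuousOn (fun t _ => hf t)
    (fun t ht => Or.inl ⟨t, Set.Ioo_subset_Icc_self ht, rfl⟩) cg.continuousOn (fun t _ => hg t)
    (fun t ht => Or.inr ⟨t, Set.Ioo_subset_Icc_self ht, rfl⟩) h0 ?_
  constructor
  · linarith [neg_abs_le s]
  · linarith [le_abs_self s]

lemma Sf_eq (x : Fin 6 → ℝ) : Sf.mulVec x = ![x 2, -x 0, x 1, x 5, -x 3, x 4] := by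
  ext i
  fin_cases i <;> simp [Sf, Matrix.mulVec, dotProduct, Fin.sum_univ_succ]

lemma A_neg (x y : ℝ) : A (-x) y = -A x y := by
  unfold A; rw [Even.neg_pow (by decide)]; ring

lemma A_neg' (x y : ℝ) : A x (-y) = A x y := by
  unfold A; rw [Even.neg_pow (by decide), Even.neg_pow (by decide)]

lemma V_equiv (E : ℝ) (x : Fin 6 → ℝ) : V E (Sf.mulVec x) = Sf.mulVec (V E x) := by
  rw [Sf_eq, Sf_eq]
  ext i
  fin_cases i
  · simp [V]; try ring
  · simp [V]; try ring
  · simp [V]; try ring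
  · simp [V, D, A_neg']; try ring
  · simp [V, D, A_neg]; rw [H_comm, G_comm]; ring
  · simp [V, D, A_neg']; rw [H_comm, G_comm]; ring

lemma Sf_hasDerivAt {f : ℝ → Fin 6 → ℝ} {f' : Fin 6 → ℝ} {s : ℝ} (h : HasDerivAt f f' s) :
    HasDerivAt (fun t => Sf.mulVec (f t)) (Sf.mulVec f') s := by
  rw [hasDerivAt_pi] at h ⊢
  simp only [Sf_eq]
  intro i
  fin_cases i
  · exact h 2
  · exact (h 0).neg
  · exact h 1
  · exact h 5
  · exact (h 3).neg
  · exact h 4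

end CubicAux

/-- If a solution `γ` of the regularized Hamiltonian system (with energy `E < 0`) satisfies
`γ(0) = (0, α, α, √2, −β, β)` and `γ(2τ) = (α, 0, α, β, −√2, −β)` for some `τ > 0`, then
`γ(s + 2τ) = S_f γ(s)` for all `s`, and `γ` is `12τ`-periodic. -/
theorem cubic_periodic_orbit (E α β τ : ℝ) (hE : E < 0) (hτ : 0 < τ)
    (γ : ℝ → Fin 6 → ℝ) (hγ : IsCubicSol E γ)
    (h0 : γ 0 = ![0, α, α, Real.sqrt 2, -β, β])
    (h2 : γ (2 * τ) = ![α, 0, α, β, -Real.sqrt 2, -β]) :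
    (∀ s : ℝ, γ (s + 2 * τ) = Sf.mulVec (γ s)) ∧
    (∀ s : ℝ, γ (s + 12 * τ) = γ s) := by
  have key : ∀ s : ℝ, γ (s + 2 * τ) = Sf.mulVec (γ s) := by
    apply CubicAux.V_unique E (fun s => γ (s + 2 * τ)) (fun s => Sf.mulVec (γ s))
    · intro s
      exact (CubicAux.sol_hasDerivAt hγ (s + 2 * τ)).comp_add_const s (2 * τ)
    · intro s
      rw [CubicAux.V_equiv]
      exact CubicAux.Sf_hasDerivAt (CubicAux.sol_hasDerivAt hγ s)
    · simp only [zero_add]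
      rw [h2, h0, CubicAux.Sf_eq]
      ext i
      fin_cases i <;> simp
  refine ⟨key, fun s => ?_⟩
  rw [show s + 12 * τ = s + 2 * τ + 2 * τ + 2 * τ + 2 * τ + 2 * τ + 2 * τ by ring]
  simp only [key, CubicAux.Sf_eq]
  ext i
  fin_cases i <;> simp
end

section
/- Let γ be a T-periodic solution of the Hamiltonian system ẋ = J∇Γ(x) and let S be a 2n×2n real matrix such that: (1) there exists N ∈ ℕ, N ≥ 1, with γ(s + T/N) = S γ(s) for all s; (2) Γ(Sx) = Γ(x) for all x; (3) SJ = JS; (4) S is orthogonal. Then the fundamental matrix solution X of the linearization along γ satisfies X(s + T/N) = S X(s) Sᵀ X(T/N) for all s ∈ ℝ. -/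
open Matrix

/-- The standard `2n × 2n` symplectic matrix `J = [[0, I],[−I, 0]]`, with the index set
`Fin n ⊕ Fin n` (first summand: configuration coordinates, second: momenta). -/
def stdJ (n : ℕ) : Matrix (Fin n ⊕ Fin n) (Fin n ⊕ Fin n) ℝ :=
  Matrix.fromBlocks 0 1 (-1) 0

/-- The gradient of `f : ℝ^ι → ℝ` at `x`, componentwise via the Fréchet derivative. -/
noncomputable def gradV {ι : Type} [Fintype ι] [DecidableEq ι]
    (f : (ι → ℝ) → ℝ) (x : ι → ℝ) : ι → ℝ :=
  fun i => fderiv ℝ f x (Pi.single i 1)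

/-- The Hessian matrix `D²f(x)` of `f : ℝ^ι → ℝ` at `x`. -/
noncomputable def hessM {ι : Type} [Fintype ι] [DecidableEq ι]
    (f : (ι → ℝ) → ℝ) (x : ι → ℝ) : Matrix ι ι ℝ :=
  Matrix.of fun i j => fderiv ℝ (fun y => fderiv ℝ f y (Pi.single j 1)) x (Pi.single i 1)

section Helpers

variable {ι : Type} [Fintype ι] [DecidableEq ι]

lemma fderiv2_apply_aux (f : (ι → ℝ) → ℝ) (hf : ContDiff ℝ 2 f) (x u v : ι → ℝ) :
    fderiv ℝ (fun y => fderiv ℝ f y v) x u = fderiv ℝ (fderiv ℝ f) x u v := by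
  have hd : Differentiable ℝ (fderiv ℝ f) :=
    (hf.fderiv_right (m := 1) (by norm_num)).differentiable (by norm_num)
  rw [fderiv_clm_apply (hd x) (differentiableAt_const v)]
  simp

lemma hessM_apply_aux (f : (ι → ℝ) → ℝ) (hf : ContDiff ℝ 2 f) (x : ι → ℝ) (i j : ι) :
    hessM f x i j = fderiv ℝ (fderiv ℝ f) x (Pi.single i 1) (Pi.single j 1) := by
  simp only [hessM, Matrix.of_apply]
  exact fderiv2_apply_aux f hf x _ _

lemma fderiv2_bilin_aux (f : (ι → ℝ) → ℝ) (hf : ContDiff ℝ 2 f) (x u v : ι → ℝ) :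
    fderiv ℝ (fderiv ℝ f) x u v = ∑ i, ∑ j, u i * hessM f x i j * v j := by
  have hu : ∀ w : ι → ℝ, w = ∑ i, w i • (Pi.single i (1 : ℝ) : ι → ℝ) := fun w =>
    pi_eq_sum_univ' w
  conv_lhs => rw [hu u, hu v]
  simp only [map_sum, map_smul, ContinuousLinearMap.sum_apply, ContinuousLinearMap.smul_apply,
    smul_eq_mul, Finset.mul_sum, hessM_apply_aux f hf]
  rw [Finset.sum_comm]
  refine Finset.sum_congr rfl fun i _ => Finset.sum_congr rfl fun j _ => ?_
  ring

lemma hessM_inv_aux (f : (ι → ℝ) → ℝ) (hf : ContDiff ℝ 2 f) (S : Matrix ι ι ℝ)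
    (hS : ∀ x, f (S.mulVec x) = f x) (x : ι → ℝ) :
    hessM f x = Sᵀ * hessM f (S.mulVec x) * S := by
  have hd : Differentiable ℝ (fderiv ℝ f) :=
    (hf.fderiv_right (m := 1) (by norm_num)).differentiable (by norm_num)
  have hd0 : Differentiable ℝ f := hf.differentiable (by norm_num)
  let L : (ι → ℝ) →L[ℝ] (ι → ℝ) := LinearMap.toContinuousLinearMap (Matrix.mulVecLin S)
  have hL : ∀ y, L y = S.mulVec y := fun y => rfl
  have h1 : ∀ y v, fderiv ℝ f y v = fderiv ℝ f (L y) (L v) := by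
    intro y v
    have h : HasFDerivAt (fun z => f (L z)) ((fderiv ℝ f (L y)).comp L) y :=
      (hd0 (L y)).hasFDerivAt.comp y L.hasFDerivAt
    have e : (fun z => f (L z)) = f := by
      funext z
      exact hS z
    rw [e] at h
    rw [h.fderiv]
    rfl
  have h2 : ∀ y u v, fderiv ℝ (fderiv ℝ f) y u v = fderiv ℝ (fderiv ℝ f) (L y) (L u) (L v) := by
    intro y u v
    rw [← fderiv2_apply_aux f hf, ← fderiv2_apply_aux f hf]
    have hdd : DifferentiableAt ℝ (fun z => fderiv ℝ f z (L v)) (L y) :=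
      (hd (L y)).clm_apply (differentiableAt_const _)
    have h : HasFDerivAt (fun z => fderiv ℝ f (L z) (L v)) _ y :=
      hdd.hasFDerivAt.comp y L.hasFDerivAt
    have e : (fun z => fderiv ℝ f (L z) (L v)) = fun z => fderiv ℝ f z v := by
      funext z
      exact (h1 z v).symm
    rw [e] at h
    rw [h.fderiv]
    rfl
  ext i j
  rw [hessM_apply_aux f hf, h2, fderiv2_bilin_aux f hf, Matrix.mul_apply]
  simp only [Matrix.mul_apply, Finset.sum_mul, Matrix.transpose_apply, hL, Matrix.mulVec_single_one,
    Matrix.col_apply]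
  rw [Finset.sum_comm]

lemma hessM_continuous_aux (f : (ι → ℝ) → ℝ) (hf : ContDiff ℝ 2 f) :
    Continuous (hessM f) := by
  have hc : Continuous (fderiv ℝ (fderiv ℝ f)) :=
    (hf.fderiv_right (m := 1) (by norm_num)).continuous_fderiv (by norm_num)
  refine continuous_matrix fun i j => ?_
  simp only [hessM_apply_aux f hf]
  exact (hc.clm_apply continuous_const).clm_apply continuous_const

attribute [local instance] Matrix.linftyOpNormedRing Matrix.linftyOpNormedAlgebra

lemma matrix_ode_unique_aux (A : ℝ → Matrix ι ι ℝ) (hA : Continuous A) (T : ℝ) (hT : 0 < T)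
    (hper : ∀ s, A (s + T) = A s) (Y Z : ℝ → Matrix ι ι ℝ)
    (hY : ∀ s i j, HasDerivAt (fun u => Y u i j) ((A s * Y s) i j) s)
    (hZ : ∀ s i j, HasDerivAt (fun u => Z u i j) ((A s * Z s) i j) s)
    (h0 : Y 0 = Z 0) : Y = Z := by
  obtain ⟨C, hC⟩ : ∃ C, ∀ s, ‖A s‖ ≤ C := by
    have hb := Function.Periodic.isBounded_of_continuous (f := A) hper hT.ne' hA
    obtain ⟨C, hC⟩ := hb.exists_norm_le
    exact ⟨C, fun s => hC _ ⟨s, rfl⟩⟩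
  have hder : ∀ W : ℝ → Matrix ι ι ℝ,
      (∀ s i j, HasDerivAt (fun u => W u i j) ((A s * W s) i j) s) →
      ∀ s, HasDerivAt W (A s * W s) s := by
    intro W hW s
    have h : W = fun u => ∑ i, ∑ j, W u i j • Matrix.single i j (1 : ℝ) := by
      funext u
      conv_lhs => rw [Matrix.matrix_eq_sum_single (W u)]
      simp [Matrix.smul_single]
    have h' : A s * W s = ∑ i, ∑ j, (A s * W s) i j • Matrix.single i j (1 : ℝ) := by
      conv_lhs => rw [Matrix.matrix_eq_sum_single (A s * W s)]
      simp [Matrix.smul_single]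
    rw [h', h]
    refine HasDerivAt.fun_sum fun i _ => HasDerivAt.fun_sum fun j _ => ?_
    rw [← h]
    exact (hW s i j).smul_const _
  refine ODE_solution_unique_univ (v := fun t M => A t * M) (s := fun _ => Set.univ)
    (K := C.toNNReal) (t₀ := 0) ?_ (fun t => ⟨hder Y hY t, trivial⟩)
    (fun t => ⟨hder Z hZ t, trivial⟩) h0
  intro t
  refine LipschitzOnWith.of_dist_le_mul fun M _ M' _ => ?_
  rw [dist_eq_norm, dist_eq_norm, ← mul_sub]
  refine (norm_mul_le _ _).trans ?_
  gcongr
  exact (hC t).trans (Real.le_coe_toNNReal C)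

end Helpers

/-- Roberts' Lemma 2.1: if `γ` is a `T`-periodic solution of `ẋ = J∇Γ(x)` and `S` is an
orthogonal matrix with `γ(s + T/N) = Sγ(s)`, `Γ(Sx) = Γ(x)`, and `SJ = JS`, then the
fundamental matrix solution `X` of the linearization along `γ` satisfies
`X(s + T/N) = S X(s) Sᵀ X(T/N)` for all `s`. -/
theorem roberts_time_preserving (n N : ℕ) (hn : 1 ≤ n) (hN : 1 ≤ N) (T : ℝ) (hT : 0 < T)
    (Γ : ((Fin n ⊕ Fin n) → ℝ) → ℝ) (hΓ : ContDiff ℝ 2 Γ)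
    (γ : ℝ → (Fin n ⊕ Fin n) → ℝ)
    (hsol : ∀ s : ℝ, HasDerivAt γ ((stdJ n).mulVec (gradV Γ (γ s))) s)
    (hper : ∀ s : ℝ, γ (s + T) = γ s)
    (S : Matrix (Fin n ⊕ Fin n) (Fin n ⊕ Fin n) ℝ)
    (hsym : ∀ s : ℝ, γ (s + T / N) = S.mulVec (γ s))
    (hSinv : ∀ x, Γ (S.mulVec x) = Γ x)
    (hSJ : S * stdJ n = stdJ n * S)
    (horth : Sᵀ * S = 1)
    (X : ℝ → Matrix (Fin n ⊕ Fin n) (Fin n ⊕ Fin n) ℝ)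
    (hX0 : X 0 = 1)
    (hX : ∀ (s : ℝ) (i j : Fin n ⊕ Fin n),
      HasDerivAt (fun u => X u i j) ((stdJ n * hessM Γ (γ s) * X s) i j) s) :
    ∀ s : ℝ, X (s + T / N) = S * X s * Sᵀ * X (T / N) := by
  set τ : ℝ := T / N with hτ
  have horth' : S * Sᵀ = 1 := mul_eq_one_comm.mp horth
  have hγc : Continuous γ := continuous_iff_continuousAt.2 fun s => (hsol s).continuousAt
  have hH : ∀ s, stdJ n * hessM Γ (γ (s + τ)) * S = S * (stdJ n * hessM Γ (γ s)) := by
    intro s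
    rw [hsym, hessM_inv_aux Γ hΓ S hSinv (γ s), ← mul_assoc S, hSJ]
    simp only [mul_assoc]
    rw [← mul_assoc S Sᵀ, horth', one_mul]
  have hA : Continuous fun s => stdJ n * hessM Γ (γ (s + τ)) :=
    continuous_const.matrix_mul
      ((hessM_continuous_aux Γ hΓ).comp (hγc.comp (continuous_id.add continuous_const)))
  have key := matrix_ode_unique_aux (fun s => stdJ n * hessM Γ (γ (s + τ))) hA T hT ?_
    (fun s => X (s + τ)) (fun s => S * X s * Sᵀ * X τ) ?_ ?_ ?_
  · exact fun s => congrFun key s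
  · intro s
    rw [show s + T + τ = (s + τ) + T by ring, hper]
  · intro s i j
    exact (hX (s + τ) i j).comp_add_const s τ
  · intro s i j
    have e : stdJ n * hessM Γ (γ (s + τ)) * (S * X s * Sᵀ * X τ)
        = S * (stdJ n * hessM Γ (γ s) * X s) * (Sᵀ * X τ) := by
      rw [← mul_assoc S, ← hH s]
      simp only [mul_assoc]
    rw [e]
    have e2 : ∀ u, S * X u * Sᵀ * X τ = S * X u * (Sᵀ * X τ) := fun u => mul_assoc _ _ _
    simp only [e2]
    generalize Sᵀ * X τ = R
    have e3 : ∀ M : Matrix (Fin n ⊕ Fin n) (Fin n ⊕ Fin n) ℝ,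
        (S * M * R) i j = ∑ k, (∑ l, S i l * M l k) * R k j := by
      intro M
      rw [Matrix.mul_apply]
      simp only [Matrix.mul_apply]
    simp only [e3]
    exact HasDerivAt.fun_sum fun k _ =>
      (HasDerivAt.fun_sum fun l _ => (hX s l k).const_mul (S i l)).mul_const (R k j)
  · simp only [zero_add]
    rw [hX0, mul_one, horth', one_mul]
end

section
/- Let γ be a T-periodic solution of the Hamiltonian system ẋ = J∇Γ(x) and let S be a 2n×2n real matrix such that: (1) there exists N ∈ ℕ, N ≥ 1, with γ(−s + T/N) = S γ(s) for all s; (2) Γ(Sx) = Γ(x) for all x; (3) SJ = −JS; (4) S is orthogonal. Then the fundamental matrix solution X of the linearization along γ satisfies X(−s + T/N) = S X(s) Sᵀ X(T/N) for all s ∈ ℝ. -/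
open Matrix

theorem aux_unique {ι : Type} [Fintype ι] [DecidableEq ι]
    (A : ℝ → Matrix ι ι ℝ) (hA : Continuous A) (Y Z : ℝ → Matrix ι ι ℝ)
    (hY : ∀ (s : ℝ) (i j : ι), HasDerivAt (fun u => Y u i j) ((A s * Y s) i j) s)
    (hZ : ∀ (s : ℝ) (i j : ι), HasDerivAt (fun u => Z u i j) ((A s * Z s) i j) s)
    (h0 : Y 0 = Z 0) (s : ℝ) : Y s = Z s := by
  let L : Matrix ι ι ℝ →ₗ[ℝ] ((ι → ℝ) →L[ℝ] (ι → ℝ)) :=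
    (LinearMap.toContinuousLinearMap :
      ((ι → ℝ) →ₗ[ℝ] (ι → ℝ)) ≃ₗ[ℝ] ((ι → ℝ) →L[ℝ] (ι → ℝ))).toLinearMap ∘ₗ
      (Matrix.toLin' : Matrix ι ι ℝ ≃ₗ[ℝ] ((ι → ℝ) →ₗ[ℝ] (ι → ℝ))).toLinearMap
  have hL : Continuous L := L.continuous_of_finiteDimensional
  have hLapp : ∀ M v, L M v = M *ᵥ v := fun M v => rfl
  have hLA : Continuous fun t => L (A t) := hL.comp hA
  obtain ⟨K, hK⟩ := (isCompact_Icc (a := -(|s| + 1)) (b := |s| + 1)).exists_bound_of_continuousOn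
    hLA.continuousOn
  ext i j
  have key := ODE_solution_unique_of_mem_Ioo (v := fun t y => L (A t) y) (s := fun _ => Set.univ)
    (K := K.toNNReal) (f := fun t i => Y t i j) (g := fun t i => Z t i j)
    (a := -(|s| + 1)) (b := |s| + 1) (t₀ := 0) ?_ ?_ ?_ ?_ ?_
  · have hs : s ∈ Set.Ioo (-(|s| + 1)) (|s| + 1) := by
      constructor
      · linarith [neg_abs_le s]
      · linarith [le_abs_self s]
    exact congrFun (key hs) i
  · intro t ht
    refine ((L (A t)).lipschitz.weaken ?_).lipschitzOnWith
    rw [← NNReal.coe_le_coe]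
    exact (hK t (Set.Ioo_subset_Icc_self ht)).trans (Real.le_coe_toNNReal K)
  · constructor <;> linarith [abs_nonneg s]
  · intro t _
    refine ⟨hasDerivAt_pi.2 fun i => ?_, trivial⟩
    exact hY t i j
  · intro t _
    refine ⟨hasDerivAt_pi.2 fun i => ?_, trivial⟩
    exact hZ t i j
  · funext i
    simp only [h0]

theorem aux_hessM {ι : Type} [Fintype ι] [DecidableEq ι] (f : (ι → ℝ) → ℝ)
    (hf : ContDiff ℝ 2 f) (x : ι → ℝ) (i j : ι) :
    hessM f x i j = fderiv ℝ (fderiv ℝ f) x (Pi.single i 1) (Pi.single j 1) := by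
  have hd : Differentiable ℝ (fderiv ℝ f) :=
    (hf.fderiv_right (m := 1) (by norm_num)).differentiable (by norm_num)
  have h := ((hd x).hasFDerivAt.clm_apply (hasFDerivAt_const (Pi.single j (1:ℝ) : ι → ℝ) x)).fderiv
  simp only [hessM, Matrix.of_apply]
  rw [h]
  simp

theorem aux_hess_cont {ι : Type} [Fintype ι] [DecidableEq ι] (f : (ι → ℝ) → ℝ)
    (hf : ContDiff ℝ 2 f) : Continuous (hessM f) := by
  have hd : Continuous (fderiv ℝ (fderiv ℝ f)) :=
    (hf.fderiv_right (m := 1) (by norm_num)).continuous_fderiv (by norm_num)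
  refine continuous_matrix fun i j => ?_
  simp only [aux_hessM f hf]
  exact (hd.clm_apply continuous_const).clm_apply continuous_const

theorem aux_hess_sym {ι : Type} [Fintype ι] [DecidableEq ι] (f : (ι → ℝ) → ℝ)
    (hf : ContDiff ℝ 2 f) (S : Matrix ι ι ℝ) (hS : ∀ x, f (S *ᵥ x) = f x) (x : ι → ℝ) :
    Sᵀ * hessM f (S *ᵥ x) * S = hessM f x := by
  let L : (ι → ℝ) →L[ℝ] (ι → ℝ) := LinearMap.toContinuousLinearMap (Matrix.toLin' S)
  have hL : ∀ v, L v = S *ᵥ v := fun v => rfl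
  have hd0 : Differentiable ℝ f := hf.differentiable (by norm_num)
  have hd : Differentiable ℝ (fderiv ℝ f) :=
    (hf.fderiv_right (m := 1) (by norm_num)).differentiable (by norm_num)
  have h1 : ∀ y, fderiv ℝ f y = (fderiv ℝ f (L y)).comp L := by
    intro y
    have : HasFDerivAt (f ∘ L) ((fderiv ℝ f (L y)).comp L) y :=
      (hd0 (L y)).hasFDerivAt.comp y L.hasFDerivAt
    have e : f ∘ L = f := funext fun z => hS z
    rw [e] at this
    exact this.fderiv
  have h2 : ∀ u v, fderiv ℝ (fderiv ℝ f) x u v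
      = fderiv ℝ (fderiv ℝ f) (L x) (L u) (L v) := by
    intro u v
    have hA : HasFDerivAt (fun y => fderiv ℝ f y v)
        ((ContinuousLinearMap.apply ℝ ℝ v).comp (fderiv ℝ (fderiv ℝ f) x)) x :=
      (ContinuousLinearMap.apply ℝ ℝ v).hasFDerivAt.comp x (hd x).hasFDerivAt
    have hB : HasFDerivAt (fun y => fderiv ℝ f (L y) (L v))
        ((ContinuousLinearMap.apply ℝ ℝ (L v)).comp
          ((fderiv ℝ (fderiv ℝ f) (L x)).comp L)) x :=
      (ContinuousLinearMap.apply ℝ ℝ (L v)).hasFDerivAt.comp x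
        ((hd (L x)).hasFDerivAt.comp x L.hasFDerivAt)
    have e : (fun y => fderiv ℝ f y v) = fun y => fderiv ℝ f (L y) (L v) := by
      funext y
      rw [h1 y]
      rfl
    rw [e] at hA
    have := congrArg (fun M => M u) (hA.unique hB)
    simpa using this
  have hLs : ∀ i, L (Pi.single i 1) = ∑ k, S k i • (Pi.single k (1:ℝ) : ι → ℝ) := by
    intro i
    rw [hL]
    ext k
    simp [Finset.sum_apply, Pi.single_apply]
  ext i j
  rw [aux_hessM f hf, h2, hLs, hLs, Matrix.mul_assoc]
  simp only [Matrix.mul_apply, map_sum, map_smul, ContinuousLinearMap.sum_apply,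
    ContinuousLinearMap.smul_apply, aux_hessM f hf, Matrix.transpose_apply, smul_eq_mul, hL,
    Finset.mul_sum]
  rw [Finset.sum_comm]
  refine Finset.sum_congr rfl fun k _ => Finset.sum_congr rfl fun l _ => ?_
  ring

/-- Roberts' Lemma 2.4: if `γ` is a `T`-periodic solution of `ẋ = J∇Γ(x)` and `S` is an
orthogonal matrix with `γ(−s + T/N) = Sγ(s)`, `Γ(Sx) = Γ(x)`, and `SJ = −JS`, then the
fundamental matrix solution `X` of the linearization along `γ` satisfies
`X(−s + T/N) = S X(s) Sᵀ X(T/N)` for all `s`. -/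
theorem roberts_time_reversing (n N : ℕ) (hn : 1 ≤ n) (hN : 1 ≤ N) (T : ℝ) (hT : 0 < T)
    (Γ : ((Fin n ⊕ Fin n) → ℝ) → ℝ) (hΓ : ContDiff ℝ 2 Γ)
    (γ : ℝ → (Fin n ⊕ Fin n) → ℝ)
    (hsol : ∀ s : ℝ, HasDerivAt γ ((stdJ n).mulVec (gradV Γ (γ s))) s)
    (hper : ∀ s : ℝ, γ (s + T) = γ s)
    (S : Matrix (Fin n ⊕ Fin n) (Fin n ⊕ Fin n) ℝ)
    (hsym : ∀ s : ℝ, γ (-s + T / N) = S.mulVec (γ s))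
    (hSinv : ∀ x, Γ (S.mulVec x) = Γ x)
    (hSJ : S * stdJ n = -(stdJ n * S))
    (horth : Sᵀ * S = 1)
    (X : ℝ → Matrix (Fin n ⊕ Fin n) (Fin n ⊕ Fin n) ℝ)
    (hX0 : X 0 = 1)
    (hX : ∀ (s : ℝ) (i j : Fin n ⊕ Fin n),
      HasDerivAt (fun u => X u i j) ((stdJ n * hessM Γ (γ s) * X s) i j) s) :
    ∀ s : ℝ, X (-s + T / N) = S * X s * Sᵀ * X (T / N) := by
  have hSS : S * Sᵀ = 1 := mul_eq_one_comm.1 horth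
  have hγ : Continuous γ := continuous_iff_continuousAt.2 fun s => (hsol s).continuousAt
  set c : ℝ := T / N with hc
  have hH : ∀ x, S * hessM Γ x * Sᵀ = hessM Γ (S *ᵥ x) := by
    intro x
    rw [← aux_hess_sym Γ hΓ S hSinv x]
    calc S * (Sᵀ * hessM Γ (S *ᵥ x) * S) * Sᵀ
        = (S * Sᵀ) * hessM Γ (S *ᵥ x) * (S * Sᵀ) := by simp only [Matrix.mul_assoc]
      _ = _ := by rw [hSS]; simp
  refine aux_unique (fun s => -(stdJ n * hessM Γ (S *ᵥ γ s))) ?_ (fun s => X (-s + c))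
    (fun s => S * X s * Sᵀ * X c) ?_ ?_ ?_
  · exact (continuous_const.matrix_mul ((aux_hess_cont Γ hΓ).comp
      (continuous_const.matrix_mulVec hγ))).neg
  · intro s i j
    have h1 : HasDerivAt (fun u : ℝ => -u + c) (-1) s := (hasDerivAt_neg s).add_const c
    have h2 := (hX (-s + c) i j).comp s h1
    rw [hsym] at h2
    refine h2.congr_deriv ?_
    simp [Matrix.neg_mul]
  · intro s i j
    have e : -(stdJ n * hessM Γ (S *ᵥ γ s)) * (S * X s * Sᵀ * X c)
        = S * (stdJ n * hessM Γ (γ s) * X s) * (Sᵀ * X c) := by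
      rw [← hH]
      calc -(stdJ n * (S * hessM Γ (γ s) * Sᵀ)) * (S * X s * Sᵀ * X c)
          = -(stdJ n * S) * hessM Γ (γ s) * (Sᵀ * S) * X s * (Sᵀ * X c) := by
            simp only [Matrix.mul_assoc, Matrix.neg_mul]
        _ = _ := by
            rw [horth, ← hSJ]
            simp only [Matrix.mul_assoc, Matrix.one_mul]
    simp only [e]
    simp only [Matrix.mul_assoc S (X _) Sᵀ, Matrix.mul_assoc S _ (X c),
      Matrix.mul_assoc (X _) Sᵀ (X c), Matrix.mul_assoc S _ (Sᵀ * X c)]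
    generalize Sᵀ * X c = B
    have hXs := hX s
    generalize stdJ n * hessM Γ (γ s) * X s = D at hXs
    simp only [Matrix.mul_apply]
    refine HasDerivAt.fun_sum fun k _ => HasDerivAt.const_mul _ ?_
    exact HasDerivAt.fun_sum fun l _ => (hXs k l).mul_const _
  · simp [hX0, hSS]
end
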